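/- If (X,φ) is a synchronizing dynamical system, then the set of periodic points of φ is dense in X. -/

import Mathlib

open Filter Topology Set

namespace Paper

variable {X : Type*} [MetricSpace X] [CompactSpace X]

/-- The `n`-th iterate (for `n : ℤ`) of the homeomorphism `φ`. -/
def It (φ : X ≃ₜ X) (n : ℤ) : X → X := fun x => (φ.toEquiv ^ n) x

/-- The local stable set `Xˢ(x, ε)`. -/
def locS (φ : X ≃ₜ X) (x : X) (ε : ℝ) : Set X :=
  {y | ∀ n : ℕ, dist (It φ n x) (It φ n y) ≤ ε}

/-- The local unstable set `Xᵘ(x, ε)`. -/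
def locU (φ : X ≃ₜ X) (x : X) (ε : ℝ) : Set X :=
  {y | ∀ n : ℕ, dist (It φ (-(n : ℤ)) x) (It φ (-(n : ℤ)) y) ≤ ε}

/-- The set `D_ε` on which the bracket is defined. -/
def Dset (φ : X ≃ₜ X) (ε : ℝ) : Set (X × X) :=
  {p | (locS φ p.1 ε ∩ locU φ p.2 ε).Nonempty}

/-- `(X, φ)` is expansive with expansiveness constant `εX`. -/
def IsExpansive (φ : X ≃ₜ X) (εX : ℝ) : Prop :=
  0 < εX ∧ ∀ x y : X, (∀ n : ℤ, dist (It φ n x) (It φ n y) ≤ εX) → x = y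

/-- The metric is adapted (Fried), with constants `η` and `lam`. -/
def IsAdapted (φ : X ≃ₜ X) (η lam : ℝ) : Prop :=
  0 < η ∧ 0 < lam ∧ lam < 1 ∧
    (∀ x y : X, y ∈ locS φ x η → dist (φ x) (φ y) ≤ lam * dist x y) ∧
    (∀ x y : X, y ∈ locU φ x η → dist (φ.symm x) (φ.symm y) ≤ lam * dist x y)

/-- `p` is a periodic point of `φ`. -/
def IsPeriodic (φ : X ≃ₜ X) (p : X) : Prop :=
  ∃ n : ℕ, 1 ≤ n ∧ It φ n p = p

/-- `x` is a synchronizing point: `(x, x)` is in the interior of `D_ε` for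
some `0 < ε ≤ ε₀`. -/
def IsSyncPt (φ : X ≃ₜ X) (ε₀ : ℝ) (x : X) : Prop :=
  ∃ ε : ℝ, 0 < ε ∧ ε ≤ ε₀ ∧ (x, x) ∈ interior (Dset φ ε)

/-- `(X, φ)` is irreducible. -/
def Irred (φ : X ≃ₜ X) : Prop :=
  ∀ U V : Set X, IsOpen U → IsOpen V → U.Nonempty → V.Nonempty →
    ∃ n : ℕ, 0 < n ∧ (It φ n '' U ∩ V).Nonempty

/-- `(X, φ)` is mixing. -/
def Mixing (φ : X ≃ₜ X) : Prop :=
  ∀ U V : Set X, IsOpen U → IsOpen V → U.Nonempty → V.Nonempty →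
    ∃ N : ℕ, ∀ n : ℕ, N ≤ n → (It φ n '' U ∩ V).Nonempty

/-- Every point of `(X, φ)` is non-wandering. -/
def NonWandering (φ : X ≃ₜ X) : Prop :=
  ∀ x : X, ∀ U ∈ 𝓝 x, ∃ n : ℕ, 0 < n ∧ (It φ n '' U ∩ U).Nonempty

/-- Stable equivalence `x ∼ₛ y`. -/
def StableEq (φ : X ≃ₜ X) (x y : X) : Prop :=
  Tendsto (fun n : ℕ => dist (It φ n x) (It φ n y)) atTop (𝓝 0)

/-- Unstable equivalence `x ∼ᵤ y`. -/
def UnstableEq (φ : X ≃ₜ X) (x y : X) : Prop :=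
  Tendsto (fun n : ℕ => dist (It φ (-(n : ℤ)) x) (It φ (-(n : ℤ)) y)) atTop (𝓝 0)

/-- Local conjugacy `x ∼_lc y`: a homeomorphism `γ : U → V` of open
neighborhoods with `γ x = y` and `sup_{z ∈ U} d(φⁿ z, φⁿ (γ z)) → 0` as
`n → ±∞`. -/
def LocConj (φ : X ≃ₜ X) (x y : X) : Prop :=
  ∃ (U V : Set X) (γ γinv : X → X),
    IsOpen U ∧ IsOpen V ∧ x ∈ U ∧ y ∈ V ∧ γ x = y ∧
    Set.MapsTo γ U V ∧ Set.MapsTo γinv V U ∧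
    (∀ z ∈ U, γinv (γ z) = z) ∧ (∀ w ∈ V, γ (γinv w) = w) ∧
    ContinuousOn γ U ∧ ContinuousOn γinv V ∧
    (∀ ε : ℝ, 0 < ε → ∃ N : ℕ, ∀ n : ℤ, (N : ℤ) ≤ |n| → ∀ z ∈ U,
      dist (It φ n z) (It φ n (γ z)) ≤ ε)

/-- Stable local conjugacy `x ∼_lcs y`: a homeomorphism of `Xᵘ(x, δ)` onto
its image in `Xᵘ(y, δ')` sending `x` to `y`, uniformly asymptotic in forward
time. -/
def StableLC (φ : X ≃ₜ X) (x y : X) : Prop :=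
  ∃ (δ δ' : ℝ) (γ : X → X), 0 < δ ∧ 0 < δ' ∧
    Set.MapsTo γ (locU φ x δ) (locU φ y δ') ∧
    Set.InjOn γ (locU φ x δ) ∧ ContinuousOn γ (locU φ x δ) ∧ γ x = y ∧
    (∀ ε : ℝ, 0 < ε → ∃ N : ℕ, ∀ n : ℕ, N ≤ n → ∀ z ∈ locU φ x δ,
      dist (It φ n z) (It φ n (γ z)) ≤ ε)

/-- Unstable local conjugacy `x ∼_lcu y`: a homeomorphism of `Xˢ(x, δ)` onto
its image in `Xˢ(y, δ')` sending `x` to `y`, uniformly asymptotic in backward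
time. -/
def UnstableLC (φ : X ≃ₜ X) (x y : X) : Prop :=
  ∃ (δ δ' : ℝ) (γ : X → X), 0 < δ ∧ 0 < δ' ∧
    Set.MapsTo γ (locS φ x δ) (locS φ y δ') ∧
    Set.InjOn γ (locS φ x δ) ∧ ContinuousOn γ (locS φ x δ) ∧ γ x = y ∧
    (∀ ε : ℝ, 0 < ε → ∃ N : ℕ, ∀ n : ℕ, N ≤ n → ∀ z ∈ locS φ x δ,
      dist (It φ (-(n : ℤ)) z) (It φ (-(n : ℤ)) (γ z)) ≤ ε)

set_option linter.unusedSectionVars false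

theorem It_zero (φ : X ≃ₜ X) (x : X) : It φ 0 x = x := by simp [It]

theorem It_one (φ : X ≃ₜ X) (x : X) : It φ 1 x = φ x := by simp [It]

theorem It_add (φ : X ≃ₜ X) (m n : ℤ) (x : X) : It φ (m + n) x = It φ m (It φ n x) := by
  simp [It, zpow_add]

theorem It_symm (φ : X ≃ₜ X) (n : ℤ) (x : X) : It φ.symm n x = It φ (-n) x := by
  have h : φ.symm.toEquiv = (φ.toEquiv : Equiv.Perm X)⁻¹ := rfl
  simp only [It, h, zpow_neg, inv_zpow]

theorem continuous_It_nat (φ : X ≃ₜ X) (n : ℕ) : Continuous (It φ n) := by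
  induction n with
  | zero => exact continuous_id.congr fun x => (It_zero φ x).symm
  | succ n ih =>
    refine (φ.continuous.comp ih).congr fun x => ?_
    rw [Nat.cast_succ, add_comm, It_add, It_one, Function.comp]

theorem continuous_It (φ : X ≃ₜ X) (n : ℤ) : Continuous (It φ n) := by
  obtain ⟨k, rfl | rfl⟩ := n.eq_nat_or_neg
  · exact continuous_It_nat φ k
  · exact (continuous_It_nat φ.symm k).congr fun x => It_symm φ k x

theorem locS_symm (φ : X ≃ₜ X) (x : X) (ε : ℝ) : locS φ.symm x ε = locU φ x ε := by
  simp only [locS, locU, It_symm]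

theorem locU_symm (φ : X ≃ₜ X) (x : X) (ε : ℝ) : locU φ.symm x ε = locS φ x ε := by
  simp only [locS, locU, It_symm, neg_neg]

theorem isClosed_setOf_mem_locS (φ : X ≃ₜ X) (ε : ℝ) :
    IsClosed {p : X × X | p.2 ∈ locS φ p.1 ε} := by
  have h : {p : X × X | p.2 ∈ locS φ p.1 ε} =
      ⋂ n : ℕ, {p : X × X | dist (It φ n p.1) (It φ n p.2) ≤ ε} := by
    ext p; simp [locS]
  rw [h]
  exact isClosed_iInter fun n => isClosed_le
    (((continuous_It φ n).comp continuous_fst).dist ((continuous_It φ n).comp continuous_snd))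
    continuous_const

theorem isClosed_setOf_mem_locU (φ : X ≃ₜ X) (ε : ℝ) :
    IsClosed {p : X × X | p.2 ∈ locU φ p.1 ε} := by
  simpa only [locS_symm] using isClosed_setOf_mem_locS φ.symm ε

theorem IsAdapted.symm {φ : X ≃ₜ X} {η lam : ℝ} (h : IsAdapted φ η lam) :
    IsAdapted φ.symm η lam := by
  obtain ⟨hη, h0, h1, hs, hu⟩ := h
  refine ⟨hη, h0, h1, ?_, ?_⟩
  · simpa only [locS_symm] using hu
  · simpa only [locU_symm, Homeomorph.symm_symm] using hs

/-- Forward iterates contract local stable sets geometrically. -/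
theorem IsAdapted.dist_It_le {φ : X ≃ₜ X} {η lam : ℝ} (h : IsAdapted φ η lam) {x y : X}
    (hy : y ∈ locS φ x η) (m : ℕ) :
    dist (It φ m x) (It φ m y) ≤ lam ^ m * dist x y := by
  induction m with
  | zero => simp [It_zero]
  | succ m ih =>
    have hm : It φ m y ∈ locS φ (It φ m x) η := fun n => by
      have := hy (n + m)
      rwa [Nat.cast_add, It_add, It_add] at this
    have h1 := h.2.2.2.1 _ _ hm
    rw [Nat.cast_succ, add_comm, It_add, It_add, It_one, It_one, pow_succ']
    calc _ ≤ lam * dist (It φ m x) (It φ m y) := h1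
      _ ≤ lam * (lam ^ m * dist x y) := mul_le_mul_of_nonneg_left ih h.2.1.le
      _ = _ := by ring

/-- Backward iterates contract local unstable sets geometrically. -/
theorem IsAdapted.dist_It_neg_le {φ : X ≃ₜ X} {η lam : ℝ} (h : IsAdapted φ η lam) {x y : X}
    (hy : y ∈ locU φ x η) (m : ℕ) :
    dist (It φ (-(m : ℤ)) x) (It φ (-(m : ℤ)) y) ≤ lam ^ m * dist x y := by
  have := h.symm.dist_It_le ((locS_symm φ x η).symm ▸ hy) m
  rwa [It_symm, It_symm] at this

theorem eq_of_mem_locS_of_mem_locU {φ : X ≃ₜ X} {εX ε : ℝ} (hexp : IsExpansive φ εX)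
    (hε : ε ≤ εX) {x y : X} (hs : y ∈ locS φ x ε) (hu : y ∈ locU φ x ε) : x = y := by
  refine hexp.2 x y fun n => ?_
  obtain ⟨k, rfl | rfl⟩ := n.eq_nat_or_neg
  · exact (hs k).trans hε
  · exact (hu k).trans hε

/-- Near a synchronizing point `x`, the bracket is defined and takes values close to `x`. -/
theorem exists_bracket_near {φ : X ≃ₜ X} {εX ε : ℝ} (hexp : IsExpansive φ εX) (hε : ε ≤ εX)
    {x : X} (hx : (x, x) ∈ interior (Dset φ ε)) {r : ℝ} (hr : 0 < r) :
    ∃ ρ > 0, ∀ u ∈ Metric.ball x ρ, ∀ v ∈ Metric.ball x ρ,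
      ∃ w, w ∈ locS φ u ε ∧ w ∈ locU φ v ε ∧ dist w x < r := by
  let C : Set ((X × X) × X) :=
    {q | q.2 ∈ locS φ q.1.1 ε ∧ q.2 ∈ locU φ q.1.2 ε ∧ r ≤ dist q.2 x}
  have hC : IsClosed C := by
    refine ((isClosed_setOf_mem_locS φ ε).preimage
        (f := fun q : (X × X) × X => (q.1.1, q.2)) (by fun_prop)).inter
      (((isClosed_setOf_mem_locU φ ε).preimage
        (f := fun q : (X × X) × X => (q.1.2, q.2)) (by fun_prop)).inter
      (isClosed_le continuous_const (continuous_snd.dist continuous_const)))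
  have hP : IsClosed (Prod.fst '' C) := isClosedMap_fst_of_compactSpace C hC
  have hxP : (x, x) ∉ Prod.fst '' C := by
    rintro ⟨⟨⟨u, v⟩, w⟩, ⟨hs, hu, hd⟩, he⟩
    obtain ⟨rfl, rfl⟩ := Prod.mk.inj he
    have hw := eq_of_mem_locS_of_mem_locU hexp hε hs hu
    simp only at hw hd
    rw [← hw, dist_self] at hd
    exact hr.not_ge hd
  have hnhds : interior (Dset φ ε) ∩ (Prod.fst '' C)ᶜ ∈ 𝓝 (x, x) :=
    inter_mem (isOpen_interior.mem_nhds hx) (hP.isOpen_compl.mem_nhds hxP)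
  obtain ⟨ρ, hρ, hsub⟩ := Metric.mem_nhds_iff.1 hnhds
  refine ⟨ρ, hρ, fun u hu v hv => ?_⟩
  have huv : (u, v) ∈ Metric.ball (x, x) ρ := by
    rw [← ball_prod_same]; exact ⟨hu, hv⟩
  obtain ⟨hD, hN⟩ := hsub huv
  obtain ⟨w, hws, hwu⟩ := interior_subset hD
  refine ⟨w, hws, hwu, ?_⟩
  by_contra hd
  exact hN ⟨((u, v), w), ⟨hws, hwu, not_lt.1 hd⟩, rfl⟩

/-- In an irreducible system, every nonempty open set returns to itself at arbitrarily late times. -/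
theorem Irred.exists_late_return {φ : X ≃ₜ X} (h : Irred φ) {U : Set X} (hU : IsOpen U)
    (hne : U.Nonempty) (N : ℕ) : ∃ n : ℕ, 0 < n ∧ N ≤ n ∧ ∃ y ∈ U, It φ n y ∈ U := by
  obtain ⟨x, hx⟩ := hne
  have hV : IsOpen (It φ (-(N : ℤ)) ⁻¹' U) := hU.preimage (continuous_It φ _)
  have hVne : (It φ (-(N : ℤ)) ⁻¹' U).Nonempty :=
    ⟨It φ N x, by rwa [mem_preimage, ← It_add, neg_add_cancel, It_zero]⟩
  obtain ⟨n, hn, -, ⟨z, hz, rfl⟩, hzU⟩ := h _ U hV hU hVne ⟨x, hx⟩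
  refine ⟨n + N, by omega, by omega, _, hz, ?_⟩
  rwa [← It_add, Nat.cast_add, add_neg_cancel_right]

/-- Concatenating `k` copies of the orbit segment from `y` to `It φ n y` by means of a bracket. -/
theorem exists_concatenation {φ : X ≃ₜ X} {η lam r : ℝ} (had : IsAdapted φ η lam)
    {B : Set X} {y : X} {n : ℕ} (hn : 0 < n) (hy : y ∈ B)
    (hbr : ∀ u ∈ B, ∃ w, w ∈ locS φ u η ∧ w ∈ locU φ (It φ n y) η ∧
      dist w u ≤ r ∧ dist w (It φ n y) ≤ r)
    (hB : Metric.closedBall y (lam ^ n * r) ⊆ B) (k : ℕ) :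
    ∃ z ∈ B, ∀ m < k * n,
      dist (It φ m z) (It φ (m % n : ℕ) y) ≤ r * (1 + (1 - lam ^ m) / (1 - lam)) := by
  obtain ⟨-, h0, h1, -⟩ := id had
  have h1' : 0 < 1 - lam := sub_pos.2 h1
  induction k with
  | zero => exact ⟨y, hy, fun m hm => by omega⟩
  | succ k ih =>
    obtain ⟨z, hz, hm⟩ := ih
    obtain ⟨w, hws, hwu, hdu, hdb⟩ := hbr z hz
    have hr : 0 ≤ r := dist_nonneg.trans hdu
    have hseg : ∀ i ≤ n, dist (It φ i (It φ (-(n : ℤ)) w)) (It φ i y) ≤ lam ^ (n - i) * r := by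
      intro i hi
      have h := had.dist_It_neg_le hwu (n - i)
      rw [← It_add, dist_comm] at h
      have e1 : (-((n - i : ℕ) : ℤ) + n) = i := by omega
      have e2 : (-((n - i : ℕ) : ℤ)) = i + -(n : ℤ) := by omega
      rw [e1, e2, It_add] at h
      rw [dist_comm] at hdb
      exact h.trans (mul_le_mul_of_nonneg_left hdb (pow_nonneg h0.le _))
    refine ⟨It φ (-(n : ℤ)) w, hB ?_, fun m hmk => ?_⟩
    · simpa [It_zero] using hseg 0 (Nat.zero_le n)
    rcases lt_or_ge m n with hmn | hmn
    · rw [Nat.mod_eq_of_lt hmn]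
      have hp : 0 ≤ (1 - lam ^ m) / (1 - lam) :=
        div_nonneg (sub_nonneg.2 (pow_le_one₀ h0.le h1.le)) h1'.le
      calc _ ≤ lam ^ (n - m) * r := hseg m hmn.le
        _ ≤ 1 * r := mul_le_mul_of_nonneg_right (pow_le_one₀ h0.le h1.le) hr
        _ ≤ _ := by nlinarith
    · obtain ⟨j, rfl⟩ := Nat.exists_eq_add_of_le hmn
      have hj : j < k * n := by rw [Nat.succ_mul] at hmk; omega
      rw [← It_add, Nat.add_mod_left]
      have e : (((n + j : ℕ) : ℤ) + -(n : ℤ)) = j := by omega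
      rw [e]
      have hst := had.dist_It_le hws j
      rw [dist_comm, dist_comm z] at hst
      have hpow : lam ^ (n + j) ≤ lam ^ (j + 1) :=
        pow_le_pow_of_le_one h0.le h1.le (by omega)
      have hgeom : lam ^ j + (1 - lam ^ j) / (1 - lam) ≤ (1 - lam ^ (n + j)) / (1 - lam) := by
        rw [le_div_iff₀ h1', add_mul, div_mul_cancel₀ _ h1'.ne']
        rw [pow_succ] at hpow
        linarith
      calc _ ≤ dist (It φ j w) (It φ j z) + dist (It φ j z) (It φ (j % n : ℕ) y) :=
            dist_triangle _ _ _
        _ ≤ lam ^ j * r + r * (1 + (1 - lam ^ j) / (1 - lam)) :=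
            add_le_add (hst.trans (mul_le_mul_of_nonneg_left hdu (pow_nonneg h0.le _))) (hm j hj)
        _ = r * (1 + (lam ^ j + (1 - lam ^ j) / (1 - lam))) := by ring
        _ ≤ _ := mul_le_mul_of_nonneg_left (by linarith) hr

/-- If arbitrarily long concatenations of one orbit segment are `δ`-shadowed, then there is a
periodic point `δ`-close to its starting point. -/
theorem exists_periodic_of_shadowed {φ : X ≃ₜ X} {εX δ : ℝ} (hexp : IsExpansive φ εX)
    (hδ : 2 * δ ≤ εX) {y : X} {n : ℕ} (hn : 0 < n)
    (h : ∀ k : ℕ, ∃ z, ∀ m < k * n, dist (It φ m z) (It φ (m % n : ℕ) y) ≤ δ) :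
    ∃ p, IsPeriodic φ p ∧ dist p y ≤ δ := by
  choose z hz using h
  let q : ℕ → X := fun k => It φ (k * n : ℕ) (z (2 * k))
  obtain ⟨p, -, s, hs, hp⟩ := isCompact_univ.tendsto_subseq (fun k => mem_univ (q k))
  refine ⟨p, ⟨n, hn, ?_⟩, ?_⟩
  · symm
    refine hexp.2 _ _ fun m => ?_
    rw [← It_add]
    refine le_of_tendsto ((((continuous_It φ m).tendsto p).comp hp).dist
      (((continuous_It φ (m + n)).tendsto p).comp hp)) ?_
    filter_upwards [eventually_ge_atTop (m.natAbs + 2)] with i hi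
    have hk : m.natAbs + 2 ≤ s i := hi.trans (hs.id_le i)
    generalize hkk : s i = k at hk
    have hkn : m.natAbs + n < k * n := by
      nlinarith [Nat.mul_le_mul_right n hk, Nat.mul_le_mul_left m.natAbs hn]
    obtain ⟨a, ha⟩ := Int.eq_ofNat_of_zero_le (a := m + (k * n : ℕ)) (by omega)
    have h1 := hz (2 * k) a (by rw [mul_assoc]; omega)
    have h2 := hz (2 * k) (a + n) (by rw [mul_assoc]; omega)
    rw [Nat.add_mod_right] at h2
    have e : m + n + (k * n : ℕ) = (a + n : ℕ) := by rw [Nat.cast_add]; omega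
    simp only [Function.comp, hkk, q]
    rw [← It_add, ← It_add, ha, e]
    exact (dist_triangle_right _ _ _).trans ((add_le_add h1 h2).trans (by linarith))
  · refine le_of_tendsto (hp.dist tendsto_const_nhds) ?_
    filter_upwards [eventually_ge_atTop 1] with i hi
    have hk : 1 ≤ s i := hi.trans (hs.id_le i)
    have h1 := hz (2 * s i) (s i * n) (by nlinarith)
    rw [Nat.mul_mod_left] at h1
    simpa [It_zero, q] using h1

/-- Every neighborhood of a synchronizing point contains a periodic point. -/
theorem IsSyncPt.exists_periodic_mem {φ : X ≃ₜ X} {εX η lam : ℝ} (hexp : IsExpansive φ εX)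
    (had : IsAdapted φ η lam) (hirr : Irred φ) {x : X}
    (hx : IsSyncPt φ (min η (εX / 2)) x) {U : Set X} (hU : U ∈ 𝓝 x) :
    ∃ p ∈ U, IsPeriodic φ p := by
  obtain ⟨ε, -, hle, hint⟩ := hx
  have hεη : ε ≤ η := hle.trans (min_le_left _ _)
  have hεX : ε ≤ εX := by have := hle.trans (min_le_right _ _); linarith [hexp.1]
  obtain ⟨s, hs, hsU⟩ := Metric.mem_nhds_iff.1 hU
  obtain ⟨-, h0, h1, -⟩ := id had
  have h1' : 0 < 1 - lam := sub_pos.2 h1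
  set c : ℝ := 1 + 1 / (1 - lam) with hc
  have hc0 : 0 < c := by positivity
  obtain ⟨δ, hδ, hδs⟩ : ∃ δ > 0, 2 * δ ≤ min s εX := ⟨min s εX / 2, by
    have := lt_min hs hexp.1; positivity, by linarith⟩
  have hδs1 := hδs.trans (min_le_left _ _)
  have hδs2 := hδs.trans (min_le_right _ _)
  set r : ℝ := δ / c with hrdef
  have hr : 0 < r := div_pos hδ hc0
  obtain ⟨ρ₀, hρ₀, hbr⟩ := exists_bracket_near hexp hεX hint (half_pos hr)
  obtain ⟨ρ, hρ, hρmin⟩ : ∃ ρ > 0, ρ ≤ min ρ₀ (min (r / 2) δ) :=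
    ⟨_, lt_min hρ₀ (lt_min (half_pos hr) hδ), le_rfl⟩
  obtain ⟨hρ1, hρ2, hρ3⟩ : ρ ≤ ρ₀ ∧ ρ ≤ r / 2 ∧ ρ ≤ δ := by simpa using hρmin
  obtain ⟨N, hN⟩ := exists_pow_lt_of_lt_one (show 0 < ρ / 2 / r by positivity) h1
  obtain ⟨n, hn, hNn, y, hy, hyn⟩ := hirr.exists_late_return
    (Metric.isOpen_ball (x := x) (ε := ρ / 2)) ⟨x, Metric.mem_ball_self (half_pos hρ)⟩ N
  have hcontr : lam ^ n * r < ρ / 2 := by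
    rw [← lt_div_iff₀ hr]
    exact (pow_le_pow_of_le_one h0.le h1.le hNn).trans_lt hN
  rw [Metric.mem_ball] at hy hyn
  obtain ⟨p, hp, hpy⟩ := exists_periodic_of_shadowed hexp hδs2 hn (y := y) fun k => by
    obtain ⟨z, -, hz⟩ := exists_concatenation had (r := r) (B := Metric.ball x ρ) (y := y) hn
      (Metric.mem_ball.2 (by linarith)) (fun u hu => by
        obtain ⟨w, hw1, hw2, hw3⟩ := hbr u (Metric.ball_subset_ball hρ1 hu) (It φ n y)
          (Metric.mem_ball.2 (by linarith))
        rw [Metric.mem_ball] at hu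
        exact ⟨w, fun i => (hw1 i).trans hεη, fun i => (hw2 i).trans hεη,
          (dist_triangle_right _ _ x).trans (by linarith),
          (dist_triangle_right _ _ x).trans (by linarith)⟩)
      (fun u hu => Metric.mem_ball.2 ((dist_triangle _ y _).trans_lt (by
        rw [Metric.mem_closedBall] at hu; linarith))) k
    refine ⟨z, fun m hm => (hz m hm).trans ?_⟩
    calc _ ≤ r * c := by
          refine mul_le_mul_of_nonneg_left ?_ hr.le
          have : (1 - lam ^ m) / (1 - lam) ≤ 1 / (1 - lam) :=
            div_le_div_of_nonneg_right (by linarith [pow_pos h0 m]) h1'.le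
          linarith
      _ = δ := div_mul_cancel₀ _ hc0.ne'
  refine ⟨p, hsU (Metric.mem_ball.2 ?_), hp⟩
  exact (dist_triangle _ y _).trans_lt (by linarith)

theorem isOpen_setOf_isSyncPt (φ : X ≃ₜ X) (ε₀ : ℝ) : IsOpen {x | IsSyncPt φ ε₀ x} := by
  refine isOpen_iff_mem_nhds.2 fun x ⟨ε, h0, hle, hx⟩ => ?_
  have hcont : Continuous fun y : X => (y, y) := by fun_prop
  filter_upwards [(isOpen_interior.preimage hcont).mem_nhds hx] with y hy
  exact ⟨ε, h0, hle, hy⟩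

theorem IsPeriodic.iterate {φ : X ≃ₜ X} {p : X} (hp : IsPeriodic φ p) (m : ℤ) :
    IsPeriodic φ (It φ m p) := by
  obtain ⟨n, hn, h⟩ := hp
  exact ⟨n, hn, by rw [← It_add, add_comm, It_add, h]⟩

/-- in a synchronizing system, periodic points are dense. -/
theorem periodic_dense (φ : X ≃ₜ X) (εX η lam : ℝ)
    (hexp : IsExpansive φ εX) (had : IsAdapted φ η lam) (hirr : Irred φ)
    (hsync : ∃ x : X, IsSyncPt φ (min η (εX / 2)) x) :
    Dense {p : X | IsPeriodic φ p} := by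
  refine dense_iff_inter_open.2 fun V hV hVne => ?_
  obtain ⟨n, -, -, ⟨x, hx, rfl⟩, hxV⟩ := hirr _ V (isOpen_setOf_isSyncPt φ _) hV hsync hVne
  obtain ⟨p, hpV, hp⟩ := IsSyncPt.exists_periodic_mem hexp had hirr hx
    ((hV.preimage (continuous_It φ n)).mem_nhds hxV)
  exact ⟨It φ n p, hpV, hp.iterate n⟩

end Paper
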